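/- Let (X,d) be a proper metric space, ν = (ν₁,…,ν_N) ∈ 𝒫₁(X)^N, λ = (λ₁,…,λ_N) ∈ Δ_N with every λᵢ > 0, and ν* ∈ 𝒫₁(X). Then ν* ∈ Med_λ(ν) if and only if there exist functions ψ₁,…,ψ_N : X → ℝ such that: (1) each ψᵢ is 1-Lipschitz and is a Kantorovich potential between νᵢ and ν*, i.e. W₁(νᵢ,ν*) = ∫ ψᵢ dνᵢ − ∫ ψᵢ dν*; and (2) ∑ᵢ λᵢ ψᵢ ≤ 0 everywhere on X, with ∑ᵢ λᵢ ψᵢ = 0 on the support of ν*. -/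

import Mathlib

open MeasureTheory Filter Topology
open scoped ENNReal NNReal

/-- The set of couplings (transport plans): Borel probability measures on `X × X`
with first marginal `μ` and second marginal `ν`. -/
def Couplings {X : Type*} [MeasurableSpace X] (μ ν : Measure X) :
    Set (Measure (X × X)) :=
  {γ | IsProbabilityMeasure γ ∧ γ.map Prod.fst = μ ∧ γ.map Prod.snd = ν}

/-- The Wasserstein distance of order `1` between two measures on a metric space:
the infimum over couplings `γ` of `∫ d(x,y) dγ`. -/
noncomputable def W1 {X : Type*} [MetricSpace X] [MeasurableSpace X]
    (μ ν : Measure X) : ℝ :=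
  (⨅ γ ∈ Couplings μ ν, ∫⁻ p, edist p.1 p.2 ∂γ).toReal

/-- `𝒫₁(X)`: Borel probability measures on `X` with finite first moment. -/
def P1 (X : Type*) [MetricSpace X] [MeasurableSpace X] : Set (Measure X) :=
  {μ | IsProbabilityMeasure μ ∧ ∀ x₀ : X, Integrable (fun x => dist x₀ x) μ}

/-- `λ` belongs to the simplex `Δ_N`: nonnegative weights summing to `1`. -/
def memSimplex {N : ℕ} (l : Fin N → ℝ) : Prop :=
  (∀ i, 0 ≤ l i) ∧ ∑ i, l i = 1

/-- The dispersion functional `μ ↦ ∑ᵢ λᵢ W₁(νᵢ, μ)`. -/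
noncomputable def medCost {X : Type*} [MetricSpace X] [MeasurableSpace X] {N : ℕ}
    (l : Fin N → ℝ) (ν : Fin N → Measure X) (μ : Measure X) : ℝ :=
  ∑ i, l i * W1 (ν i) μ

/-- The set of Wasserstein medians of `ν₁, …, ν_N` with weights `λ`:
minimizers over `𝒫₁(X)` of the dispersion functional. -/
def Med {X : Type*} [MetricSpace X] [MeasurableSpace X] {N : ℕ}
    (l : Fin N → ℝ) (ν : Fin N → Measure X) : Set (Measure X) :=
  {μ | μ ∈ P1 X ∧ ∀ ρ ∈ P1 X, medCost l ν μ ≤ medCost l ν ρ}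

/-- The (topological) support of a measure: points all of whose neighbourhoods have
positive measure. -/
def msupport {X : Type*} [TopologicalSpace X] [MeasurableSpace X] (μ : Measure X) :
    Set X :=
  {x : X | ∀ U ∈ nhds x, μ U ≠ 0}

theorem LipschitzWith.integrable_of_mem_P1 {X : Type*} [MetricSpace X] [MeasurableSpace X]
    [BorelSpace X] [SecondCountableTopology X]
    {μ : Measure X} (hμ : μ ∈ P1 X) {f : X → ℝ} (hf : LipschitzWith 1 f) : Integrable f μ := by
  have := hμ.1
  obtain ⟨x₀⟩ : Nonempty X := nonempty_of_isProbabilityMeasure μ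
  refine ((integrable_const |f x₀|).add (hμ.2 x₀)).mono'
    hf.continuous.aestronglyMeasurable (ae_of_all _ fun x => ?_)
  have h := hf.dist_le_mul x x₀
  rw [Real.dist_eq, dist_comm x] at h
  simp only [NNReal.coe_one, one_mul] at h
  have := abs_sub_abs_le_abs_sub (f x) (f x₀)
  simp only [Pi.add_apply, Real.norm_eq_abs]
  linarith

theorem sub_integral_le_W1 {X : Type*} [MetricSpace X] [MeasurableSpace X]
    [BorelSpace X] [SecondCountableTopology X]
    {μ ν : Measure X} (hμ : μ ∈ P1 X) (hν : ν ∈ P1 X) {f : X → ℝ} (hf : LipschitzWith 1 f) :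
    ∫ x, f x ∂μ - ∫ x, f x ∂ν ≤ W1 μ ν := by
  have := hμ.1
  have := hν.1
  obtain ⟨x₀⟩ : Nonempty X := nonempty_of_isProbabilityMeasure μ
  have hint : ∀ γ ∈ Couplings μ ν, ∀ g : X → ℝ, LipschitzWith 1 g →
      (Integrable (fun p : X × X => g p.1) γ ∧ ∫ p, g p.1 ∂γ = ∫ x, g x ∂μ) ∧
      (Integrable (fun p : X × X => g p.2) γ ∧ ∫ p, g p.2 ∂γ = ∫ x, g x ∂ν) := by
    rintro γ ⟨-, h1, h2⟩ g hg
    have i1 := hg.integrable_of_mem_P1 hμ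
    have i2 := hg.integrable_of_mem_P1 hν
    subst h1 h2
    exact ⟨⟨i1.comp_measurable measurable_fst,
        (integral_map measurable_fst.aemeasurable hg.continuous.aestronglyMeasurable).symm⟩,
      ⟨i2.comp_measurable measurable_snd,
        (integral_map measurable_snd.aemeasurable hg.continuous.aestronglyMeasurable).symm⟩⟩
  have hdist : ∀ γ ∈ Couplings μ ν, Integrable (fun p : X × X => dist p.1 p.2) γ := by
    intro γ hγ
    obtain ⟨⟨i1, -⟩, i2, -⟩ := hint γ hγ (dist x₀) (LipschitzWith.dist_right x₀)
    refine (i1.add i2).mono' continuous_dist.aestronglyMeasurable (ae_of_all _ fun p => ?_)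
    rw [Real.norm_of_nonneg dist_nonneg]
    exact dist_triangle_left _ _ _
  have hcost : ∀ γ ∈ Couplings μ ν,
      ∫⁻ p, edist p.1 p.2 ∂γ = ENNReal.ofReal (∫ p, dist p.1 p.2 ∂γ) := by
    intro γ hγ
    rw [ofReal_integral_eq_lintegral_ofReal (hdist γ hγ) (ae_of_all _ fun p => dist_nonneg)]
    simp_rw [edist_dist]
  have hprod : μ.prod ν ∈ Couplings μ ν :=
    ⟨inferInstance, by simp [Measure.map_fst_prod], by simp [Measure.map_snd_prod]⟩
  rw [W1, ← ENNReal.ofReal_le_iff_le_toReal]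
  · refine le_iInf₂ fun γ hγ => ?_
    rw [hcost γ hγ]
    obtain ⟨⟨i1, e1⟩, i2, e2⟩ := hint γ hγ f hf
    rw [← e1, ← e2, ← integral_sub i1 i2]
    refine ENNReal.ofReal_le_ofReal (integral_mono (i1.sub i2) (hdist γ hγ) fun p => ?_)
    have := hf.dist_le_mul p.1 p.2
    rw [Real.dist_eq, NNReal.coe_one, one_mul] at this
    exact (le_abs_self _).trans this
  · refine ne_top_of_le_ne_top ?_ (iInf₂_le _ hprod)
    rw [hcost _ hprod]
    exact ENNReal.ofReal_ne_top

/-- A finite family of measurable nonnegative weights adding up to `1` at every point: the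
fraction `π j x` of the mass at `x` is sent to the `j`-th target. -/
structure IsTransportWeights {X ι : Type*} [MeasurableSpace X] [Fintype ι] (π : ι → X → ℝ) :
    Prop where
  measurable : ∀ j, Measurable (π j)
  nonneg : ∀ j x, 0 ≤ π j x
  sum_eq_one : ∀ x, ∑ j, π j x = 1

namespace IsTransportWeights

variable {X ι : Type*} [MeasurableSpace X] [Fintype ι] {π ρ : ι → X → ℝ} {ν : Measure X}

theorem le_one (h : IsTransportWeights π) (j : ι) (x : X) : π j x ≤ 1 :=
  (h.sum_eq_one x) ▸ Finset.single_le_sum (fun i _ => h.nonneg i x) (Finset.mem_univ j)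

theorem integrable [IsFiniteMeasure ν] (h : IsTransportWeights π) (j : ι) :
    Integrable (π j) ν :=
  (integrable_const (1 : ℝ)).mono' (h.measurable j).aestronglyMeasurable
    (ae_of_all _ fun x => by rw [Real.norm_of_nonneg (h.nonneg j x)]; exact h.le_one j x)

theorem integrable_mul_dist [MetricSpace X] [BorelSpace X] [SecondCountableTopology X]
    (hν : ν ∈ P1 X) (h : IsTransportWeights π) (j : ι) (y : X) :
    Integrable (fun x => π j x * dist x y) ν :=
  ((LipschitzWith.dist_left y).integrable_of_mem_P1 hν).mono'
    ((h.measurable j).mul (by fun_prop)).aestronglyMeasurable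
    (ae_of_all _ fun x => by
      rw [Real.norm_of_nonneg (mul_nonneg (h.nonneg j x) dist_nonneg)]
      exact mul_le_of_le_one_left dist_nonneg (h.le_one j x))

theorem sum_integral_eq_one [IsProbabilityMeasure ν] (h : IsTransportWeights π) :
    ∑ j, ∫ x, π j x ∂ν = 1 := by
  rw [← integral_finsetSum _ fun j _ => h.integrable j]
  simp [h.sum_eq_one]

theorem convexCombo (h : IsTransportWeights π) (h' : IsTransportWeights ρ) {a b : ℝ}
    (ha : 0 ≤ a) (hb : 0 ≤ b) (hab : a + b = 1) :
    IsTransportWeights fun j x => a * π j x + b * ρ j x where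
  measurable j := ((h.measurable j).const_mul a).add ((h'.measurable j).const_mul b)
  nonneg j x := add_nonneg (mul_nonneg ha (h.nonneg j x)) (mul_nonneg hb (h'.nonneg j x))
  sum_eq_one x := by
    rw [Finset.sum_add_distrib, ← Finset.mul_sum, ← Finset.mul_sum, h.sum_eq_one, h'.sum_eq_one,
      mul_one, mul_one, hab]

theorem const {u : ι → ℝ} (hu : ∀ j, 0 ≤ u j) (hu1 : ∑ j, u j = 1) :
    IsTransportWeights fun j (_ : X) => u j :=
  ⟨fun _ => measurable_const, fun j _ => hu j, fun _ => hu1⟩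

theorem integral_convexCombo [IsFiniteMeasure ν] (h : IsTransportWeights π)
    (h' : IsTransportWeights ρ) (a b : ℝ) (j : ι) :
    ∫ x, (a * π j x + b * ρ j x) ∂ν = a * ∫ x, π j x ∂ν + b * ∫ x, ρ j x ∂ν := by
  rw [integral_add ((h.integrable j).const_mul a) ((h'.integrable j).const_mul b),
    integral_const_mul, integral_const_mul]

theorem integral_cost_convexCombo [MetricSpace X] [BorelSpace X] [SecondCountableTopology X]
    (hν : ν ∈ P1 X) (h : IsTransportWeights π) (h' : IsTransportWeights ρ) (p : ι → X) (a b : ℝ) :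
    ∫ x, ∑ j, (a * π j x + b * ρ j x) * dist x (p j) ∂ν =
      a * ∫ x, ∑ j, π j x * dist x (p j) ∂ν + b * ∫ x, ∑ j, ρ j x * dist x (p j) ∂ν := by
  rw [← integral_const_mul, ← integral_const_mul, ← integral_add
    ((integrable_finsetSum _ fun j _ => h.integrable_mul_dist hν j _).const_mul a)
    ((integrable_finsetSum _ fun j _ => h'.integrable_mul_dist hν j _).const_mul b)]
  refine integral_congr_ae (ae_of_all _ fun x => ?_)
  simp only [Finset.mul_sum, ← Finset.sum_add_distrib]
  exact Finset.sum_congr rfl fun j _ => by ring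

theorem exists_sum_mul_eq_inf' [Nonempty ι] {c : ι → X → ℝ}
    (hc : ∀ j, Measurable (c j)) :
    ∃ π : ι → X → ℝ, IsTransportWeights π ∧
      ∀ x, ∑ j, π j x * c j x = Finset.univ.inf' Finset.univ_nonempty fun j => c j x := by
  classical
  set m : X → ℝ := fun x => Finset.univ.inf' Finset.univ_nonempty fun j => c j x with hm
  have hmm : Measurable m := by
    have : m = Finset.univ.inf' Finset.univ_nonempty c := by
      ext x
      simp [hm]
    rw [this]
    exact Finset.inf'_induction _ _ (fun _ h _ h' => h.inf h') fun j _ => hc j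
  set g : ι → X → ℝ := fun j => {x | c j x = m x}.indicator 1 with hg
  have hgm : ∀ j, Measurable (g j) := fun j =>
    measurable_one.indicator (measurableSet_eq_fun (hc j) hmm)
  have hg0 : ∀ j x, 0 ≤ g j x := fun j x => Set.indicator_nonneg (fun _ _ => zero_le_one) x
  have hpos : ∀ x, 0 < ∑ j, g j x := fun x => by
    obtain ⟨j, hj, e⟩ := Finset.exists_mem_eq_inf' Finset.univ_nonempty fun j => c j x
    refine Finset.sum_pos' (fun i _ => hg0 i x) ⟨j, hj, ?_⟩
    have : x ∈ {x | c j x = m x} := e.symm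
    simp [hg, Set.indicator_of_mem this]
  refine ⟨fun j x => g j x / ∑ i, g i x, ⟨fun j => (hgm j).div
    (Finset.measurable_fun_sum _ fun i _ => hgm i), fun j x => div_nonneg (hg0 j x) (hpos x).le,
    fun x => by rw [← Finset.sum_div, div_self (hpos x).ne']⟩, fun x => ?_⟩
  have : ∀ j, g j x / (∑ i, g i x) * c j x = g j x / (∑ i, g i x) * m x := fun j => by
    by_cases h : x ∈ {x | c j x = m x}
    · rw [h]
    · simp [hg, Set.indicator_of_notMem h]
  rw [Finset.sum_congr rfl fun j _ => this j, ← Finset.sum_mul, ← Finset.sum_div,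
    div_self (hpos x).ne', one_mul]

end IsTransportWeights

theorem W1_le_of_weights {X : Type*} [MetricSpace X] [MeasurableSpace X]
    [BorelSpace X] [SecondCountableTopology X]
    {ι : Type*} [Fintype ι] {ν : Measure X} (hν : ν ∈ P1 X) (p : ι → X) {π : ι → X → ℝ}
    (h : IsTransportWeights π) :
    W1 ν (∑ j, ENNReal.ofReal (∫ x, π j x ∂ν) • Measure.dirac (p j)) ≤
      ∫ x, ∑ j, π j x * dist x (p j) ∂ν := by
  have := hν.1
  have hintd := fun j => h.integrable_mul_dist hν j (p j)
  have hmk : ∀ j, Measurable fun x : X => (x, p j) := fun j => measurable_id.prodMk measurable_const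
  set γ : Measure (X × X) :=
    ∑ j, (ν.withDensity fun x => ENNReal.ofReal (π j x)).map fun x => (x, p j) with hγ
  have hfst : γ.map Prod.fst = ν := by
    ext s hs
    rw [Measure.map_apply measurable_fst hs, hγ, Measure.finsetSum_apply]
    have : ∀ j, (Measure.map (fun x => (x, p j)) (ν.withDensity fun x => ENNReal.ofReal (π j x)))
        (Prod.fst ⁻¹' s) = ∫⁻ x in s, ENNReal.ofReal (π j x) ∂ν := fun j => by
      rw [Measure.map_apply (hmk j) (measurable_fst hs), withDensity_apply]
      · rfl
      · exact hs
    simp_rw [this]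
    rw [← lintegral_finsetSum _ fun j _ => (h.measurable j).ennreal_ofReal]
    simp_rw [← ENNReal.ofReal_sum_of_nonneg fun j _ => h.nonneg j _, h.sum_eq_one]
    simp
  have hsnd : γ.map Prod.snd = ∑ j, ENNReal.ofReal (∫ x, π j x ∂ν) • Measure.dirac (p j) := by
    ext s hs
    rw [Measure.map_apply measurable_snd hs, hγ, Measure.finsetSum_apply,
      Measure.finsetSum_apply]
    refine Finset.sum_congr rfl fun j _ => ?_
    rw [Measure.map_apply (hmk j) (measurable_snd hs), Measure.smul_apply,
      Measure.dirac_apply' _ hs,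
      ofReal_integral_eq_lintegral_ofReal (h.integrable j) (ae_of_all _ (h.nonneg j))]
    by_cases hp : p j ∈ s <;> simp [Set.preimage, hp]
  have hcost : ∫⁻ q, edist q.1 q.2 ∂γ = ENNReal.ofReal (∫ x, ∑ j, π j x * dist x (p j) ∂ν) := by
    rw [hγ, lintegral_finsetSum_measure, integral_finsetSum _ fun j _ => hintd j,
      ENNReal.ofReal_sum_of_nonneg fun j _ =>
        integral_nonneg fun x => mul_nonneg (h.nonneg j x) dist_nonneg]
    refine Finset.sum_congr rfl fun j _ => ?_
    rw [lintegral_map measurable_edist (hmk j),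
      lintegral_withDensity_eq_lintegral_mul _ (h.measurable j).ennreal_ofReal (by fun_prop),
      ofReal_integral_eq_lintegral_ofReal (hintd j)
        (ae_of_all _ fun x => mul_nonneg (h.nonneg j x) dist_nonneg)]
    refine lintegral_congr fun x => ?_
    simp [ENNReal.ofReal_mul (h.nonneg j x), edist_dist]
  have hmem : γ ∈ Couplings ν (∑ j, ENNReal.ofReal (∫ x, π j x ∂ν) • Measure.dirac (p j)) := by
    refine ⟨⟨?_⟩, hfst, hsnd⟩
    rw [← measure_univ (μ := ν), ← hfst, Measure.map_apply measurable_fst .univ, Set.preimage_univ]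
  rw [W1]
  refine ENNReal.toReal_le_of_le_ofReal (integral_nonneg fun x =>
    Finset.sum_nonneg fun j _ => mul_nonneg (h.nonneg j x) dist_nonneg) ?_
  exact (iInf₂_le γ hmem).trans hcost.le

theorem lipschitzWith_inf'_dist_add {X : Type*} [MetricSpace X]
    {ι : Type*} [Fintype ι] [Nonempty ι] (p : ι → X) (a : ι → ℝ) :
    LipschitzWith 1 fun x =>
      Finset.univ.inf' Finset.univ_nonempty fun j => dist x (p j) + a j := by
  refine LipschitzWith.of_le_add fun x y => ?_
  obtain ⟨j, hj, e⟩ := Finset.exists_mem_eq_inf' Finset.univ_nonempty fun j => dist y (p j) + a j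
  rw [e]
  refine (Finset.inf'_le _ hj).trans ?_
  linarith [dist_triangle x y (p j)]

/-- Semi-discrete Kantorovich duality, for a target measure with positive weights. -/
theorem W1_sum_dirac_le_of_pos {X : Type*} [MetricSpace X] [MeasurableSpace X]
    [BorelSpace X] [SecondCountableTopology X]
    {ι : Type*} [Fintype ι] {ν : Measure X} (hν : ν ∈ P1 X) (p : ι → X) {w : ι → ℝ}
    (hw : ∀ j, 0 < w j) (hw1 : ∑ j, w j = 1) {D : ℝ}
    (hD : ∀ f : X → ℝ, LipschitzWith 1 f → ∫ x, f x ∂ν - ∑ j, w j * f (p j) ≤ D) :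
    W1 ν (∑ j, ENNReal.ofReal (w j) • Measure.dirac (p j)) ≤ D := by
  classical
  have := hν.1
  have hne : Nonempty ι := by
    by_contra h
    rw [not_nonempty_iff] at h
    simp at hw1
  refine le_of_forall_pos_le_add fun ε hε => ?_
  set A : Set ((ι → ℝ) × ℝ) := {q | ∃ π : ι → X → ℝ, IsTransportWeights π ∧
    (∀ j, ∫ x, π j x ∂ν = q.1 j) ∧ ∫ x, ∑ j, π j x * dist x (p j) ∂ν ≤ q.2} with hA
  have hconv : Convex ℝ A := by
    rintro q ⟨π, hπ, hm, hc⟩ q' ⟨ρ, hρ, hm', hc'⟩ a b ha hb hab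
    refine ⟨_, hπ.convexCombo hρ ha hb hab, fun j => ?_, ?_⟩
    · rw [hπ.integral_convexCombo hρ, hm, hm']
      simp
    · rw [hπ.integral_cost_convexCombo hν hρ]
      simp only [Prod.snd_add, Prod.smul_snd, smul_eq_mul]
      gcongr
  have hclos : (w, D + ε / 2) ∈ closure A := by
    by_contra hnot
    obtain ⟨f, u, hfu, hfA⟩ :=
      geometric_hahn_banach_point_closed hconv.closure isClosed_closure hnot
    replace hfA : ∀ q ∈ A, u < f q := fun q hq => hfA q (subset_closure hq)
    set α : ι → ℝ := fun j => f (Pi.single j 1, 0) with hα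
    set β : ℝ := f (0, 1) with hβ
    have hf : ∀ (m : ι → ℝ) (t : ℝ), f (m, t) = ∑ j, m j * α j + t * β := fun m t => by
      have : (m, t) =
          ∑ j, m j • ((Pi.single j 1, 0) : (ι → ℝ) × ℝ) + t • ((0, 1) : (ι → ℝ) × ℝ) := by
        ext i
        · simp [Prod.fst_sum, Finset.sum_apply, Pi.single_apply]
        · simp [Prod.snd_sum]
      rw [this, map_add, map_sum]
      simp only [map_smul, smul_eq_mul, hα, hβ]
    have hβpos : 0 < β := by
      have hmem : (w, max (∫ x, ∑ j, w j * dist x (p j) ∂ν) (D + ε / 2 + 1)) ∈ A :=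
        ⟨_, .const (fun j => (hw j).le) hw1, fun j => by simp, le_max_left _ _⟩
      have h1 := hfA _ hmem
      rw [hf] at hfu h1
      have h2 := le_max_right (∫ x, ∑ j, w j * dist x (p j) ∂ν) (D + ε / 2 + 1)
      by_contra hb
      nlinarith
    obtain ⟨π, hπ, hmin⟩ := IsTransportWeights.exists_sum_mul_eq_inf'
      (c := fun j x => dist x (p j) + α j / β) fun j => by fun_prop
    set ψ : X → ℝ := fun x =>
      Finset.univ.inf' Finset.univ_nonempty fun j => dist x (p j) + α j / β with hψ
    have h1 := hfA (fun j => ∫ x, π j x ∂ν, ∫ x, ∑ j, π j x * dist x (p j) ∂ν)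
      ⟨π, hπ, fun j => rfl, le_rfl⟩
    have h2 : ∫ x, ψ x ∂ν =
        ∫ x, ∑ j, π j x * dist x (p j) ∂ν + ∑ j, (∫ x, π j x ∂ν) * (α j / β) := by
      simp_rw [← integral_mul_const]
      rw [← integral_finsetSum _ fun j _ => (hπ.integrable j).mul_const _, ← integral_add
        (integrable_finsetSum _ fun j _ => hπ.integrable_mul_dist hν j _)
        (integrable_finsetSum _ fun j _ => (hπ.integrable j).mul_const _)]
      refine integral_congr_ae (ae_of_all _ fun x => ?_)
      simp only [hψ, ← hmin, mul_add, Finset.sum_add_distrib]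
    have h3 : ∑ j, w j * ψ (p j) ≤ ∑ j, w j * (α j / β) := by
      refine Finset.sum_le_sum fun j _ => mul_le_mul_of_nonneg_left ?_ (hw j).le
      refine (Finset.inf'_le _ (Finset.mem_univ j)).trans ?_
      simp
    have h4 := hD ψ (lipschitzWith_inf'_dist_add p _)
    rw [hf] at hfu h1
    have h5 : ∀ m : ι → ℝ, ∑ j, m j * α j = (∑ j, m j * (α j / β)) * β := fun m => by
      rw [Finset.sum_mul]
      exact Finset.sum_congr rfl fun j _ => by field_simp
    rw [h5] at hfu h1
    have h6 := hfu.trans h1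
    rw [← add_mul, ← add_mul, mul_lt_mul_iff_left₀ hβpos] at h6
    linarith
  set M : ℝ := ∑ j, ∫ x, dist x (p j) ∂ν with hM
  have hM0 : 0 ≤ M := Finset.sum_nonneg fun j _ => integral_nonneg fun x => dist_nonneg
  obtain ⟨δ, hδ0, hδ1, hδM⟩ : ∃ δ : ℝ, 0 < δ ∧ δ ≤ 1 ∧ δ * M ≤ ε / 4 := by
    refine ⟨min 1 (ε / 4 / (M + 1)), by positivity, min_le_left _ _, ?_⟩
    calc _ ≤ ε / 4 / (M + 1) * (M + 1) := by gcongr; exacts [min_le_right _ _, by linarith]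
      _ = ε / 4 := by field_simp
  have hopen : IsOpen {q : (ι → ℝ) × ℝ | (∀ j, (1 - δ) * q.1 j < w j) ∧ q.2 < D + 3 * ε / 4} := by
    have : IsOpen {q : (ι → ℝ) × ℝ | ∀ j, (1 - δ) * q.1 j < w j} := by
      rw [Set.ofPred_forall]
      exact isOpen_iInter_of_finite fun j => isOpen_lt (by fun_prop) (by fun_prop)
    exact this.inter (isOpen_lt continuous_snd continuous_const)
  obtain ⟨⟨m, t⟩, ⟨hmw, ht⟩, π, hπ, hm, hc⟩ := mem_closure_iff.1 hclos _ hopen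
    ⟨fun j => by nlinarith [hw j], by simp only; linarith⟩
  simp only at hmw ht hm hc
  set u : ι → ℝ := fun j => (w j - (1 - δ) * m j) / δ with hu
  have hu0 : ∀ j, 0 ≤ u j := fun j => div_nonneg (by linarith [hmw j]) hδ0.le
  have hu1 : ∑ j, u j = 1 := by
    have hm1 := hπ.sum_integral_eq_one (ν := ν)
    simp_rw [hm] at hm1
    rw [hu, ← Finset.sum_div, Finset.sum_sub_distrib, ← Finset.mul_sum, hw1, hm1]
    field_simp
    ring
  have huw : IsTransportWeights fun j (_ : X) => u j := .const hu0 hu1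
  have hfin := W1_le_of_weights hν p (hπ.convexCombo huw (sub_nonneg.2 hδ1) hδ0.le (by ring))
  rw [hπ.integral_cost_convexCombo hν huw] at hfin
  simp_rw [hπ.integral_convexCombo huw, hm] at hfin
  have hwu : ∀ j, (1 - δ) * m j + δ * ∫ _, u j ∂ν = w j := fun j => by
    simp only [hu, integral_const, probReal_univ, one_smul]
    field_simp
    ring
  simp_rw [hwu] at hfin
  have hcu : ∫ x, ∑ j, u j * dist x (p j) ∂ν ≤ M := by
    rw [integral_finsetSum _ fun j _ => huw.integrable_mul_dist hν j _]
    refine Finset.sum_le_sum fun j _ => ?_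
    rw [integral_const_mul]
    obtain ⟨x₀⟩ : Nonempty X := nonempty_of_isProbabilityMeasure ν
    exact mul_le_of_le_one_left (integral_nonneg fun x => dist_nonneg) (huw.le_one j x₀)
  have hc0 : 0 ≤ ∫ x, ∑ j, π j x * dist x (p j) ∂ν :=
    integral_nonneg fun x => Finset.sum_nonneg fun j _ => mul_nonneg (hπ.nonneg j x) dist_nonneg
  nlinarith

/-- Semi-discrete Kantorovich duality. -/
theorem W1_sum_dirac_le {X : Type*} [MetricSpace X] [MeasurableSpace X]
    [BorelSpace X] [SecondCountableTopology X]
    {ι : Type*} [Fintype ι] {ν : Measure X} (hν : ν ∈ P1 X) (p : ι → X) {w : ι → ℝ}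
    (hw : ∀ j, 0 ≤ w j) (hw1 : ∑ j, w j = 1) {D : ℝ}
    (hD : ∀ f : X → ℝ, LipschitzWith 1 f → ∫ x, f x ∂ν - ∑ j, w j * f (p j) ≤ D) :
    W1 ν (∑ j, ENNReal.ofReal (w j) • Measure.dirac (p j)) ≤ D := by
  classical
  have hz : ∀ j ∉ Set.range (Subtype.val : {j // 0 < w j} → ι), w j = 0 := fun j hj =>
    le_antisymm (not_lt.1 fun h => hj ⟨⟨j, h⟩, rfl⟩) (hw j)
  have hsub (g : ι → ℝ) (hg : ∀ j, w j = 0 → g j = 0) :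
      ∑ j : {j // 0 < w j}, g j = ∑ j, g j :=
    Fintype.sum_of_injective _ Subtype.val_injective _ _ (fun j hj => hg j (hz j hj)) fun _ => rfl
  rw [← Fintype.sum_of_injective (Subtype.val : {j // 0 < w j} → ι) Subtype.val_injective
    (fun j => ENNReal.ofReal (w j) • Measure.dirac (p j)) _ (fun j hj => by simp [hz j hj])
    fun _ => rfl]
  refine W1_sum_dirac_le_of_pos hν (fun j : {j // 0 < w j} => p j) (fun j => j.2)
    ((hsub w fun _ h => h).trans hw1) fun f hf => ?_
  rw [hsub (fun j => w j * f (p j)) fun j hj => by simp [hj]]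
  exact hD f hf

theorem sum_dirac_mem_P1 {X : Type*} [MetricSpace X] [MeasurableSpace X]
    [BorelSpace X] [SecondCountableTopology X]
    {ι : Type*} [Fintype ι] (p : ι → X) {w : ι → ℝ}
    (hw : ∀ j, 0 ≤ w j) (hw1 : ∑ j, w j = 1) :
    ∑ j, ENNReal.ofReal (w j) • Measure.dirac (p j) ∈ P1 X := by
  refine ⟨⟨?_⟩, fun x₀ => ?_⟩
  · simp [Measure.finsetSum_apply, ← ENNReal.ofReal_sum_of_nonneg fun j _ => hw j, hw1]
  · refine integrable_finsetSum_measure.2 fun j _ =>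
      Integrable.smul_measure ?_ ENNReal.ofReal_ne_top
    exact integrable_dirac' (by fun_prop) (by simp)

/-- The dual value `∑ᵢ λᵢ ∫ ψᵢ dνᵢ - ∑ᵢ λᵢ ψᵢ(x)` of the potentials `ψ` at the point `x`. -/
noncomputable def medDual {X : Type*} [MetricSpace X] [MeasurableSpace X]
    {N : ℕ} (l : Fin N → ℝ) (ν : Fin N → Measure X) (ψ : Fin N → X → ℝ)
    (x : X) : ℝ :=
  ∑ i, l i * ∫ y, ψ i y ∂(ν i) - ∑ i, l i * ψ i x

theorem LipschitzWith.convexCombo {X : Type*} [MetricSpace X]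
    {f g : X → ℝ} (hf : LipschitzWith 1 f) (hg : LipschitzWith 1 g)
    {a b : ℝ} (ha : 0 ≤ a) (hb : 0 ≤ b) (hab : a + b = 1) :
    LipschitzWith 1 fun x => a * f x + b * g x := by
  refine LipschitzWith.of_le_add fun x y => ?_
  have h1 := mul_le_mul_of_nonneg_left (LipschitzWith.le_add_mul hf x y) ha
  have h2 := mul_le_mul_of_nonneg_left (LipschitzWith.le_add_mul hg x y) hb
  have h3 : dist x y = a * dist x y + b * dist x y := by rw [← add_mul, hab, one_mul]
  simp only [NNReal.coe_one, one_mul] at h1 h2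
  linarith

/-- Approximate dual optimizers for finitely many constraints. -/
theorem exists_medDual_ge_of_finite {X : Type*} [MetricSpace X] [MeasurableSpace X]
    [BorelSpace X] [SecondCountableTopology X]
    {N : ℕ} {l : Fin N → ℝ} (hl : memSimplex l) {ν : Fin N → Measure X} (hν : ∀ i, ν i ∈ P1 X)
    {V : ℝ} (hV : ∀ ρ ∈ P1 X, V ≤ medCost l ν ρ) {ι : Type*} [Fintype ι] (p : ι → X)
    {ε : ℝ} (hε : 0 < ε) :
    ∃ ψ : Fin N → X → ℝ, (∀ i, LipschitzWith 1 (ψ i)) ∧ ∀ j, V - ε ≤ medDual l ν ψ (p j) := by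
  classical
  set C : Set (ι → ℝ) := {y | ∃ ψ : Fin N → X → ℝ, (∀ i, LipschitzWith 1 (ψ i)) ∧
    ∀ j, y j ≤ medDual l ν ψ (p j)} with hC
  have hconv : Convex ℝ C := by
    rintro y ⟨ψ, hψ, hy⟩ y' ⟨ψ', hψ', hy'⟩ a b ha hb hab
    refine ⟨fun i x => a * ψ i x + b * ψ' i x, fun i => (hψ i).convexCombo (hψ' i) ha hb hab,
      fun j => ?_⟩
    have : medDual l ν (fun i x => a * ψ i x + b * ψ' i x) (p j) =
        a * medDual l ν ψ (p j) + b * medDual l ν ψ' (p j) := by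
      simp only [medDual, mul_sub, Finset.mul_sum, ← Finset.sum_sub_distrib,
        ← Finset.sum_add_distrib]
      refine Finset.sum_congr rfl fun i _ => ?_
      rw [integral_add (((hψ i).integrable_of_mem_P1 (hν i)).const_mul a)
        (((hψ' i).integrable_of_mem_P1 (hν i)).const_mul b), integral_const_mul,
        integral_const_mul]
      ring
    rw [this]
    simp only [Pi.add_apply, Pi.smul_apply, smul_eq_mul]
    exact add_le_add (mul_le_mul_of_nonneg_left (hy j) ha) (mul_le_mul_of_nonneg_left (hy' j) hb)
  by_cases hz : (fun _ => V - ε / 2) ∈ closure C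
  · have hopen : IsOpen {y : ι → ℝ | ∀ j, V - ε < y j} := by
      rw [Set.ofPred_forall]
      exact isOpen_iInter_of_finite fun j => isOpen_lt (by fun_prop) (by fun_prop)
    obtain ⟨y, hy, ψ, hψ, h⟩ := mem_closure_iff.1 hz _ hopen fun j => by linarith
    exact ⟨ψ, hψ, fun j => (hy j).le.trans (h j)⟩
  exfalso
  obtain ⟨f, u, hfC, hfu⟩ := geometric_hahn_banach_closed_point hconv.closure isClosed_closure hz
  replace hfC : ∀ y ∈ C, f y < u := fun y hy => hfC y (subset_closure hy)
  set w : ι → ℝ := fun j => f (Pi.single j 1) with hw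
  have hf : ∀ y : ι → ℝ, f y = ∑ j, y j * w j := fun y => by
    conv_lhs => rw [pi_eq_sum_univ' y]
    rw [map_sum]
    simp only [map_smul, smul_eq_mul, hw]
  have hval : ∀ ψ : Fin N → X → ℝ, (∀ i, LipschitzWith 1 (ψ i)) →
      ∑ j, medDual l ν ψ (p j) * w j < u := fun ψ hψ => by
    rw [← hf fun j => medDual l ν ψ (p j)]
    exact hfC _ ⟨ψ, hψ, fun j => le_rfl⟩
  have hw0 : ∀ j, 0 ≤ w j := fun j => by
    by_contra hneg
    rw [not_le] at hneg
    have h0 : ∀ t : ℝ, 0 ≤ t → -(t * w j) < u := fun t ht => by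
      have := hfC (-(t • Pi.single j 1)) ⟨fun _ _ => 0, fun _ => LipschitzWith.const' 0, fun i => by
        by_cases h : i = j
        · subst h; simp [medDual, ht]
        · simp [medDual, h]⟩
      simpa using this
    have h1 := h0 ((|u| + 1) / -w j) (by have := neg_pos.2 hneg; positivity)
    have h2 : -((|u| + 1) / -w j * w j) = |u| + 1 := by
      have := hneg.ne
      field_simp
    linarith [le_abs_self u]
  set W : ℝ := ∑ j, w j with hW
  have hu0 : 0 < u := by simpa [medDual] using hval (fun _ _ => 0) fun _ => LipschitzWith.const' 0
  rw [hf, ← Finset.mul_sum] at hfu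
  have hWpos : 0 < W := by
    refine (Finset.sum_nonneg fun j _ => hw0 j).lt_of_ne fun h => ?_
    rw [← hW] at h
    rw [← hW, ← h] at hfu
    linarith
  have hw'0 : ∀ j, 0 ≤ w j / W := fun j => div_nonneg (hw0 j) hWpos.le
  have hw'1 : ∑ j, w j / W = 1 := by rw [← Finset.sum_div, div_self hWpos.ne']
  have hKR : ∀ i, ∃ ψ : X → ℝ, LipschitzWith 1 ψ ∧
      W1 (ν i) (∑ j, ENNReal.ofReal (w j / W) • Measure.dirac (p j)) - ε / 2 <
        ∫ x, ψ x ∂(ν i) - ∑ j, w j / W * ψ (p j) := fun i => by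
    by_contra! hcon
    have := W1_sum_dirac_le (hν i) p hw'0 hw'1 hcon
    linarith
  choose ψ hψ hψW using hKR
  have h1 := hV _ (sum_dirac_mem_P1 p hw'0 hw'1)
  have h2 : medCost l ν (∑ j, ENNReal.ofReal (w j / W) • Measure.dirac (p j)) - ε / 2 ≤
      (∑ j, medDual l ν ψ (p j) * w j) / W := by
    calc _ = ∑ i, l i *
            (W1 (ν i) (∑ j, ENNReal.ofReal (w j / W) • Measure.dirac (p j)) - ε / 2) := by
          simp only [mul_sub, Finset.sum_sub_distrib, ← Finset.sum_mul, hl.2, one_mul, medCost]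
      _ ≤ ∑ i, l i * (∫ x, ψ i x ∂(ν i) - ∑ j, w j / W * ψ i (p j)) :=
          Finset.sum_le_sum fun i _ => mul_le_mul_of_nonneg_left (hψW i).le (hl.1 i)
      _ = _ := by
          simp only [medDual, sub_mul, Finset.sum_sub_distrib, sub_div, mul_sub]
          rw [← Finset.mul_sum, ← hW, mul_div_cancel_right₀ _ hWpos.ne']
          congr 1
          simp only [Finset.sum_mul, Finset.sum_div, Finset.mul_sum]
          rw [Finset.sum_comm]
          refine Finset.sum_congr rfl fun j _ => Finset.sum_congr rfl fun i _ => by ring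
  have h3 := div_lt_div_of_pos_right ((hval ψ hψ).trans hfu) hWpos
  rw [← hW, mul_div_cancel_right₀ _ hWpos.ne'] at h3
  linarith

/-- Families of `1`-Lipschitz functions vanishing at a base point are sequentially compact for
pointwise convergence. -/
theorem exists_subseq_tendsto_of_lipschitzWith {X : Type*} [MetricSpace X]
    [TopologicalSpace.SeparableSpace X] {κ : Type*} [Countable κ]
    {x₀ : X} {f : ℕ → κ → X → ℝ} (hf : ∀ n k, LipschitzWith 1 (f n k))
    (hf0 : ∀ n k, f n k x₀ = 0) :
    ∃ (g : κ → X → ℝ) (φ : ℕ → ℕ), StrictMono φ ∧ (∀ k, LipschitzWith 1 (g k)) ∧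
      ∀ k x, Tendsto (fun n => f (φ n) k x) atTop (𝓝 (g k x)) := by
  have : Nonempty X := ⟨x₀⟩
  set d := TopologicalSpace.denseSeq X with hd
  have hdist : ∀ n k x y, |f n k x - f n k y| ≤ dist x y := fun n k x y => by
    simpa [Real.dist_eq] using (hf n k).dist_le_mul x y
  have hK : IsCompact (Set.univ.pi fun q : κ × ℕ => Set.Icc (-dist (d q.2) x₀) (dist (d q.2) x₀)) :=
    isCompact_univ_pi fun q => isCompact_Icc
  obtain ⟨a, -, φ, hφ, ha⟩ := hK.tendsto_subseq (x := fun n (q : κ × ℕ) => f n q.1 (d q.2))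
    fun n q _ => by
      have := hdist n q.1 (d q.2) x₀
      rw [hf0, sub_zero] at this
      exact abs_le.1 this
  rw [tendsto_pi_nhds] at ha
  have hcau : ∀ k x, CauchySeq fun n => f (φ n) k x := fun k x => by
    rw [Metric.cauchySeq_iff]
    intro ε hε
    obtain ⟨m, hm⟩ := (TopologicalSpace.denseRange_denseSeq X).exists_dist_lt x
      (show 0 < ε / 3 by positivity)
    obtain ⟨n₀, hn₀⟩ := Metric.cauchySeq_iff.1 (ha (k, m)).cauchySeq (ε / 3) (by positivity)
    refine ⟨n₀, fun i hi j hj => ?_⟩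
    have h1 := hn₀ i hi j hj
    have h2 := abs_le.1 (hdist (φ i) k x (d m))
    have h3 := abs_le.1 (hdist (φ j) k x (d m))
    simp only [Function.comp, Real.dist_eq, abs_lt] at h1 ⊢
    constructor <;> linarith [h1.1, h1.2, h2.1, h2.2, h3.1, h3.2]
  choose g hg using fun k x => cauchySeq_tendsto_of_complete (hcau k x)
  refine ⟨g, φ, hφ, fun k => LipschitzWith.of_le_add fun x y => ?_, hg⟩
  refine le_of_tendsto_of_tendsto' (hg k x) ((hg k y).add_const _) fun n => ?_
  linarith [(abs_le.1 (hdist (φ n) k x y)).2]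

/-- Existence of dual optimizers. -/
theorem exists_medDual_ge {X : Type*} [MetricSpace X] [MeasurableSpace X]
    [BorelSpace X] [SecondCountableTopology X] [Nonempty X]
    {N : ℕ} {l : Fin N → ℝ} (hl : memSimplex l) {ν : Fin N → Measure X} (hν : ∀ i, ν i ∈ P1 X)
    {V : ℝ} (hV : ∀ ρ ∈ P1 X, V ≤ medCost l ν ρ) :
    ∃ ψ : Fin N → X → ℝ, (∀ i, LipschitzWith 1 (ψ i)) ∧ ∀ x, V ≤ medDual l ν ψ x := by
  obtain ⟨x₀⟩ := ‹Nonempty X›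
  have : Nonempty X := ⟨x₀⟩
  set d := TopologicalSpace.denseSeq X with hd
  choose f hf hfV using fun n : ℕ => exists_medDual_ge_of_finite hl hν hV
    (fun j : Fin (n + 1) => d j) (ε := 1 / ((n : ℝ) + 1)) Nat.one_div_pos_of_nat
  set F : ℕ → Fin N → X → ℝ := fun n i x => f n i x - f n i x₀ with hF
  have hFL : ∀ n i, LipschitzWith 1 (F n i) := fun n i =>
    LipschitzWith.of_le_add fun x y => by
      have := (hf n i).le_add_mul x y
      simp only [NNReal.coe_one, one_mul] at this
      simp only [hF]
      linarith
  have hFd : ∀ n x, medDual l ν (F n) x = medDual l ν (f n) x := fun n x => by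
    simp only [medDual, hF, ← Finset.sum_sub_distrib]
    refine Finset.sum_congr rfl fun i _ => ?_
    have := (hν i).1
    rw [integral_sub ((hf n i).integrable_of_mem_P1 (hν i)) (integrable_const _)]
    simp
    ring
  obtain ⟨ψ, φ, hφ, hψ, hlim⟩ := exists_subseq_tendsto_of_lipschitzWith (x₀ := x₀) hFL
    fun n i => by simp [hF]
  have hint : ∀ i, Tendsto (fun n => ∫ x, F (φ n) i x ∂(ν i)) atTop (𝓝 (∫ x, ψ i x ∂(ν i))) :=
    fun i => tendsto_integral_of_dominated_convergence (dist x₀)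
      (fun n => (hFL _ i).continuous.aestronglyMeasurable) ((hν i).2 x₀)
      (fun n => ae_of_all _ fun x => by
        have := (hFL (φ n) i).dist_le_mul x x₀
        rw [dist_comm x]  at this
        simpa [hF, Real.dist_eq] using this) (ae_of_all _ fun x => hlim i x)
  have hdual : ∀ x, Tendsto (fun n => medDual l ν (F (φ n)) x) atTop (𝓝 (medDual l ν ψ x)) :=
    fun x => (tendsto_finsetSum _ fun i _ => (hint i).const_mul _).sub
      (tendsto_finsetSum _ fun i _ => (hlim i x).const_mul _)
  refine ⟨ψ, hψ, fun x => ?_⟩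
  have hcont : Continuous (medDual l ν ψ) :=
    continuous_const.sub (continuous_finsetSum _ fun i _ => (hψ i).continuous.const_mul _)
  refine (TopologicalSpace.denseRange_denseSeq X).induction_on
    (p := fun x => V ≤ medDual l ν ψ x) x (isClosed_le continuous_const hcont) fun m => ?_
  have hε : Tendsto (fun n => V - 1 / ((φ n : ℝ) + 1)) atTop (𝓝 (V - 0)) :=
    tendsto_const_nhds.sub (tendsto_one_div_add_atTop_nhds_zero_nat.comp hφ.tendsto_atTop)
  rw [sub_zero] at hε
  refine le_of_tendsto_of_tendsto hε (hdual _) ?_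
  filter_upwards [eventually_ge_atTop m] with n hn
  rw [hFd]
  exact hfV (φ n) ⟨m, Nat.lt_succ_of_le (hn.trans hφ.le_apply)⟩

/-- Optimality conditions for Wasserstein medians: `ν* ∈ Med_λ(ν)` iff
there are `1`-Lipschitz Kantorovich potentials `ψᵢ` between `νᵢ` and `ν*`
(`W₁(νᵢ,ν*) = ∫ ψᵢ dνᵢ − ∫ ψᵢ dν*`) with `∑ᵢ λᵢ ψᵢ ≤ 0` on `X` and `∑ᵢ λᵢ ψᵢ = 0`
on the support of `ν*`. -/
theorem median_optimality_conditions
    {X : Type*} [MetricSpace X] [ProperSpace X] [MeasurableSpace X] [BorelSpace X]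
    {N : ℕ} (hN : 1 ≤ N) {l : Fin N → ℝ} (hl : memSimplex l)
    (hlpos : ∀ i, 0 < l i) {ν : Fin N → Measure X} (hν : ∀ i, ν i ∈ P1 X)
    {νstar : Measure X} (hνstar : νstar ∈ P1 X) :
    νstar ∈ Med l ν ↔
      ∃ ψ : Fin N → X → ℝ,
        (∀ i, LipschitzWith 1 (ψ i) ∧
          W1 (ν i) νstar = ∫ x, ψ i x ∂(ν i) - ∫ x, ψ i x ∂νstar) ∧
        (∀ x : X, ∑ i, l i * ψ i x ≤ 0) ∧
        (∀ x ∈ msupport νstar, ∑ i, l i * ψ i x = 0) := by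
  have hstar := hνstar.1
  have : Nonempty X := nonempty_of_isProbabilityMeasure νstar
  have hsupp : msupport νstar = νstar.support := by
    ext x
    simp [msupport, Measure.mem_support_iff_forall, pos_iff_ne_zero]
  have hdual : ∀ {ψ : Fin N → X → ℝ}, (∀ i, LipschitzWith 1 (ψ i)) → ∀ {ρ : Measure X}, ρ ∈ P1 X →
      ∑ i, l i * (∫ x, ψ i x ∂(ν i) - ∫ x, ψ i x ∂ρ) =
        ∑ i, l i * ∫ x, ψ i x ∂(ν i) - ∫ x, ∑ i, l i * ψ i x ∂ρ := fun {ψ} hψ {ρ} hρ => by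
    rw [integral_finsetSum _ fun i _ => ((hψ i).integrable_of_mem_P1 hρ).const_mul _]
    simp only [integral_const_mul, mul_sub, Finset.sum_sub_distrib]
  constructor
  · rintro ⟨-, hmin⟩
    obtain ⟨φ, hφ, hφV⟩ := exists_medDual_ge hl hν hmin
    set c : ℝ := ∑ i, l i * ∫ x, φ i x ∂(ν i) - medCost l ν νstar with hc
    set ψ : Fin N → X → ℝ := fun i x => φ i x - c with hψdef
    have hψ : ∀ i, LipschitzWith 1 (ψ i) := fun i => LipschitzWith.of_le_add fun x y => by
      have := (hφ i).le_add_mul x y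
      simp only [NNReal.coe_one, one_mul] at this
      simp only [hψdef]
      linarith
    have hsum : ∀ x, ∑ i, l i * ψ i x = ∑ i, l i * φ i x - c := fun x => by
      simp only [hψdef, mul_sub, Finset.sum_sub_distrib, ← Finset.sum_mul, hl.2, one_mul]
    have hnonpos : ∀ x, ∑ i, l i * ψ i x ≤ 0 := fun x => by
      have := hφV x
      rw [medDual] at this
      rw [hsum]
      linarith
    have hvalue : ∑ i, l i * ∫ x, ψ i x ∂(ν i) = medCost l ν νstar := by
      have : ∀ i, ∫ x, ψ i x ∂(ν i) = ∫ x, φ i x ∂(ν i) - c := fun i => by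
        have := (hν i).1
        rw [integral_sub ((hφ i).integrable_of_mem_P1 (hν i)) (integrable_const _)]
        simp
      simp only [this, mul_sub, Finset.sum_sub_distrib, ← Finset.sum_mul, hl.2, one_mul, hc]
      ring
    have hle : ∀ i ∈ Finset.univ, l i * (∫ x, ψ i x ∂(ν i) - ∫ x, ψ i x ∂νstar) ≤
        l i * W1 (ν i) νstar := fun i _ =>
      mul_le_mul_of_nonneg_left (sub_integral_le_W1 (hν i) hνstar (hψ i)) (hl.1 i)
    have hint : ∫ x, ∑ i, l i * ψ i x ∂νstar ≤ 0 := integral_nonpos hnonpos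
    have htotal := Finset.sum_le_sum hle
    have hsumeq := hdual hψ hνstar
    have hcost : ∑ i, l i * W1 (ν i) νstar = medCost l ν νstar := rfl
    refine ⟨ψ, fun i => ⟨hψ i, ?_⟩, hnonpos, fun x hx => ?_⟩
    · have := (Finset.sum_eq_sum_iff_of_le hle).1 (by linarith) i (Finset.mem_univ i)
      exact (mul_left_cancel₀ (hlpos i).ne' this).symm
    · have hcont : Continuous fun x => ∑ i, l i * ψ i x :=
        continuous_finsetSum _ fun i _ => (hψ i).continuous.const_mul _
      have hi : Integrable (fun x => ∑ i, l i * ψ i x) νstar :=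
        integrable_finsetSum _ fun i _ => ((hψ i).integrable_of_mem_P1 hνstar).const_mul _
      have hae : (fun x => -∑ i, l i * ψ i x) =ᵐ[νstar] 0 := by
        refine (integral_eq_zero_iff_of_nonneg (fun x => neg_nonneg.2 (hnonpos x)) hi.neg).1 ?_
        rw [integral_neg]
        linarith
      have hsub : νstar.support ⊆ {x | ∑ i, l i * ψ i x = 0} := by
        refine Measure.support_subset_of_isClosed (isClosed_eq hcont continuous_const) ?_
        filter_upwards [hae] with x hx
        simpa using hx
      exact hsub (hsupp ▸ hx)
  · rintro ⟨ψ, hψ, hnonpos, hzero⟩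
    refine ⟨hνstar, fun ρ hρ => ?_⟩
    have hL := fun i => (hψ i).1
    have h1 : medCost l ν νstar = ∑ i, l i * ∫ x, ψ i x ∂(ν i) := by
      have hz : ∫ x, ∑ i, l i * ψ i x ∂νstar = 0 := by
        refine integral_eq_zero_of_ae ?_
        filter_upwards [νstar.support_mem_ae] with x hx
        exact hzero x (hsupp ▸ hx)
      rw [medCost, Finset.sum_congr rfl fun i _ => by rw [(hψ i).2], hdual hL hνstar, hz, sub_zero]
    have h2 : ∑ i, l i * (∫ x, ψ i x ∂(ν i) - ∫ x, ψ i x ∂ρ) ≤ medCost l ν ρ :=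
      Finset.sum_le_sum fun i _ =>
        mul_le_mul_of_nonneg_left (sub_integral_le_W1 (hν i) hρ (hL i)) (hl.1 i)
    rw [hdual hL hρ] at h2
    have h3 : ∫ x, ∑ i, l i * ψ i x ∂ρ ≤ 0 := integral_nonpos hnonpos
    linarith
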